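/- Let n be an odd positive integer and θ ∈ (0,π/4]. Let t_{n−1,1} be the smallest zero of H_{n−1}, and let t_{n−1,0} be the unique point in (−∞, t_{n,1}) such that H_n(t_{n−1,0}) = −H_n(t_{n−1,1}). Then for every t < t_{n−1,0}, the function y ↦ Φ^θ_n(t,y) has exactly one zero in ℝ. -/

import Mathlib

/-- The physicist's Hermite polynomials: `H 0 = 1`, `H 1 = 2X`,
`H (n+2) = 2X · H (n+1) - 2(n+1) · H n`. -/
noncomputable def H : ℕ → Polynomial ℝ
  | 0 => 1
  | 1 => Polynomial.C 2 * Polynomial.X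
  | n + 2 => Polynomial.C 2 * Polynomial.X * H (n + 1) - Polynomial.C (2 * (n + 1) : ℝ) * H n

/-- The eigenfunction `Φ^θ_n(x,y) = (cos θ · H_n(x) + sin θ · H_n(y)) e^{-(x²+y²)/2}`. -/
noncomputable def Phi (n : ℕ) (θ : ℝ) : ℝ × ℝ → ℝ := fun p =>
  (Real.cos θ * (H n).eval p.1 + Real.sin θ * (H n).eval p.2) *
    Real.exp (-(p.1 ^ 2 + p.2 ^ 2) / 2)

/-- The nodal set of `Φ^θ_n`. -/
noncomputable def nodalSet (n : ℕ) (θ : ℝ) : Set (ℝ × ℝ) := {p | Phi n θ p = 0}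

/-- The number of nodal domains: the number of connected components of the
complement of the nodal set. -/
noncomputable def numNodalDomains (n : ℕ) (θ : ℝ) : ℕ :=
  {C : Set (ℝ × ℝ) | ∃ p, Phi n θ p ≠ 0 ∧
    C = connectedComponentIn {q : ℝ × ℝ | Phi n θ q ≠ 0} p}.ncard

/-!
Let `m` be even and let `a ≥ 0` be the greatest zero of `H m`. Then `H (m + 1)` is odd and increases
from `H (m + 1) a ≤ 0` to `+∞` on `[a, ∞)`. By Sonin's argument
`x ↦ H (m + 1) x ^ 2 + 2 * (m + 1) * H m x ^ 2` has derivative `8 * (m + 1) * x * H m x ^ 2`, so it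
increases with `|x|`, and comparing with `x = a` gives `|H (m + 1)| ≤ |H (m + 1) a|` on `[-a, a]`.
Hence `H (m + 1)` takes every value `c` with `|H (m + 1) a| < |c|` exactly once. On the line `x = s`
the equation `Φ = 0` prescribes for `H (m + 1) y` the value `-cot θ * H (m + 1) s`, which is such
a `c`: on the one hand `1 ≤ |cot θ|`, on the other `H (m + 1) s < H (m + 1) t₀ = H (m + 1) a ≤ 0`.
-/

section

open Polynomial

theorem isLeast_range_fin {α : Type*} [Preorder α] {m : ℕ} {t : Fin m → α} (ht : Monotone t)
    (hm : 0 < m) : IsLeast (Set.range t) (t ⟨0, hm⟩) :=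
  ⟨Set.mem_range_self _, Set.forall_mem_range.mpr fun i => ht (Fin.mk_le_of_le_val i.val.zero_le)⟩

theorem abs_sin_le_abs_cos_iff {θ : ℝ} : |Real.sin θ| ≤ |Real.cos θ| ↔ 0 ≤ Real.cos (2 * θ) := by
  rw [← sq_le_sq, Real.cos_two_mul', sub_nonneg]

theorem eval_derivative_nonneg_of_roots_le {P : ℝ[X]} {a : ℝ} (hroot : P.IsRoot a)
    (hle : ∀ y, P.IsRoot y → y ≤ a) (hlc : 0 ≤ P.leadingCoeff) : 0 ≤ (derivative P).eval a := by
  obtain ⟨Q, rfl⟩ := dvd_iff_isRoot.mpr hroot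
  have hQ : 0 ≤ Q.eval a := by
    refine zero_le_eval_of_roots_le_of_leadingCoeff_nonneg (fun y hy => hle y ?_) ?_
    · exact hy.dvd (dvd_mul_left _ _)
    · rwa [leadingCoeff_mul, leadingCoeff_X_sub_C, one_mul] at hlc
  simpa [derivative_mul] using hQ

theorem H_add_two (n : ℕ) : H (n + 2) = C 2 * X * H (n + 1) - C (2 * (n + 1) : ℝ) * H n := rfl

theorem eval_H_neg (x : ℝ) : ∀ n : ℕ, (H n).eval (-x) = (-1) ^ n * (H n).eval x
  | 0 => by simp [H]
  | 1 => by simp [H]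
  | n + 2 => by
    simp only [H_add_two, eval_sub, eval_mul, eval_C, eval_X, eval_H_neg x (n + 1),
      eval_H_neg x n]
    ring

theorem eval_H_neg_of_odd {n : ℕ} (hn : Odd n) (x : ℝ) : (H n).eval (-x) = -(H n).eval x := by
  rw [eval_H_neg, hn.neg_one_pow, neg_one_mul]

theorem derivative_H : ∀ n : ℕ, derivative (H n) = C 2 * X * H n - H (n + 1)
  | 0 => by simp [H]
  | 1 => by simp [H]
  | n + 2 => by
    rw [H_add_two (n + 1)]
    nth_rw 1 [H_add_two n]
    simp only [derivative_sub, derivative_mul, derivative_C, derivative_X, derivative_H (n + 1),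
      derivative_H n]
    simp only [H_add_two, Nat.cast_add, Nat.cast_one, C_mul, C_add, C_1]
    ring

theorem derivative_H_succ (n : ℕ) : derivative (H (n + 1)) = C (2 * (n + 1) : ℝ) * H n := by
  rw [derivative_H, H_add_two, sub_sub_cancel]

theorem degree_H : ∀ n : ℕ, (H n).degree = n
  | 0 => degree_one
  | 1 => degree_C_mul_X two_ne_zero
  | n + 2 => by
    have hlead : (C 2 * X * H (n + 1)).degree = ((n + 2 : ℕ) : WithBot ℕ) := by
      rw [degree_mul, degree_C_mul_X two_ne_zero, degree_H (n + 1)]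
      norm_cast
      omega
    rw [H_add_two, degree_sub_eq_left_of_degree_lt, hlead]
    rw [hlead, degree_C_mul (by positivity), degree_H n]
    norm_cast
    omega

theorem leadingCoeff_H : ∀ n : ℕ, (H n).leadingCoeff = 2 ^ n
  | 0 => by simp [H]
  | 1 => by simp [H]
  | n + 2 => by
    rw [H_add_two, leadingCoeff_sub_of_degree_lt, leadingCoeff_mul, leadingCoeff_C_mul_X,
      leadingCoeff_H (n + 1), pow_succ' _ (n + 1)]
    rw [degree_C_mul (by positivity), degree_mul, degree_C_mul_X two_ne_zero, degree_H,
      degree_H]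
    norm_cast
    omega

theorem leadingCoeff_H_nonneg (n : ℕ) : 0 ≤ (H n).leadingCoeff := by
  rw [leadingCoeff_H]
  positivity

theorem tendsto_eval_H_succ_atTop (n : ℕ) :
    Filter.Tendsto (fun x => (H (n + 1)).eval x) Filter.atTop Filter.atTop :=
  tendsto_atTop_of_leadingCoeff_nonneg _ (by rw [degree_H]; exact_mod_cast n.succ_pos)
    (leadingCoeff_H_nonneg _)

/-- The set of real zeros of the `n`-th Hermite polynomial. -/
def hermiteZeros (n : ℕ) : Set ℝ := {x | (H n).eval x = 0}

theorem neg_mem_hermiteZeros {n : ℕ} {x : ℝ} (hx : x ∈ hermiteZeros n) : -x ∈ hermiteZeros n := by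
  have hx0 : (H n).eval x = 0 := hx
  simp [hermiteZeros, eval_H_neg, hx0]

theorem isGreatest_hermiteZeros_neg {n : ℕ} {a : ℝ} (ha : IsLeast (hermiteZeros n) a) :
    IsGreatest (hermiteZeros n) (-a) :=
  ⟨neg_mem_hermiteZeros ha.1, fun _ hx => le_neg_of_le_neg (ha.2 (neg_mem_hermiteZeros hx))⟩

theorem eval_H_pos_of_mem_upperBounds {n : ℕ} {a x : ℝ} (ha : a ∈ upperBounds (hermiteZeros n))
    (hx : a < x) : 0 < (H n).eval x :=
  zero_lt_eval_of_roots_lt_of_leadingCoeff_nonneg (fun _ hy => (ha hy).trans_lt hx)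
    (leadingCoeff_H_nonneg n)

theorem strictMonoOn_eval_H_succ {n : ℕ} {a : ℝ} (ha : a ∈ upperBounds (hermiteZeros n)) :
    StrictMonoOn (fun x => (H (n + 1)).eval x) (Set.Ici a) := by
  refine strictMonoOn_of_deriv_pos (convex_Ici a) (H (n + 1)).continuousOn fun x hx => ?_
  have hpos : 0 < (H n).eval x := eval_H_pos_of_mem_upperBounds ha (by simpa using hx)
  rw [Polynomial.deriv, derivative_H_succ, eval_mul, eval_C]
  positivity

theorem eval_H_succ_nonpos_of_isGreatest {n : ℕ} {a : ℝ} (ha : IsGreatest (hermiteZeros n) a) :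
    (H (n + 1)).eval a ≤ 0 := by
  have hderiv : 0 ≤ (derivative (H n)).eval a :=
    eval_derivative_nonneg_of_roots_le ha.1 (fun _ hy => ha.2 hy) (leadingCoeff_H_nonneg n)
  have hzero : (H n).eval a = 0 := ha.1
  simpa [derivative_H, hzero] using hderiv

theorem greatest_hermiteZeros_le_succ {n : ℕ} {a b : ℝ} (ha : IsGreatest (hermiteZeros n) a)
    (hb : b ∈ upperBounds (hermiteZeros (n + 1))) : a ≤ b :=
  le_of_not_gt fun hba =>
    (eval_H_pos_of_mem_upperBounds hb hba).not_ge (eval_H_succ_nonpos_of_isGreatest ha)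

theorem least_hermiteZeros_succ_le {n : ℕ} {a b : ℝ} (ha : IsLeast (hermiteZeros n) a)
    (hb : IsLeast (hermiteZeros (n + 1)) b) : b ≤ a :=
  neg_le_neg_iff.mp (greatest_hermiteZeros_le_succ (isGreatest_hermiteZeros_neg ha)
    (isGreatest_hermiteZeros_neg hb).2)

/-- Sonin's function of the pair `H (n + 1)`, `H n`; at the zeros of `H n`, which are the critical
points of `H (n + 1)`, it equals the square of `H (n + 1)`. -/
noncomputable def hermiteSonin (n : ℕ) (x : ℝ) : ℝ :=
  (H (n + 1)).eval x ^ 2 + 2 * (n + 1) * (H n).eval x ^ 2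

theorem hasDerivAt_hermiteSonin (n : ℕ) (x : ℝ) :
    HasDerivAt (hermiteSonin n) (8 * (n + 1) * x * (H n).eval x ^ 2) x := by
  have h := (((H (n + 1)).hasDerivAt x).pow 2).add
    ((((H n).hasDerivAt x).pow 2).const_mul (2 * (n + 1) : ℝ))
  refine h.congr_deriv ?_
  rw [derivative_H_succ, derivative_H]
  simp only [eval_sub, eval_mul, eval_C, eval_X]
  ring

theorem monotoneOn_hermiteSonin (n : ℕ) : MonotoneOn (hermiteSonin n) (Set.Ici 0) := by
  refine monotoneOn_of_hasDerivWithinAt_nonneg (convex_Ici 0)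
    (HasDerivAt.continuousOn fun x _ => hasDerivAt_hermiteSonin n x)
    (fun x _ => (hasDerivAt_hermiteSonin n x).hasDerivWithinAt) fun x hx => ?_
  have hx0 : 0 ≤ x := interior_subset hx
  positivity

theorem hermiteSonin_neg (n : ℕ) (x : ℝ) : hermiteSonin n (-x) = hermiteSonin n x := by
  simp only [hermiteSonin, eval_H_neg, mul_pow, ← pow_mul, pow_mul', neg_one_sq, one_pow, one_mul]

theorem hermiteSonin_le_of_abs_le (n : ℕ) {x y : ℝ} (hxy : |x| ≤ |y|) :
    hermiteSonin n x ≤ hermiteSonin n y := by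
  have habs (z : ℝ) : hermiteSonin n |z| = hermiteSonin n z := by
    rcases abs_choice z with h | h <;> rw [h]
    exact hermiteSonin_neg n z
  simpa only [habs] using monotoneOn_hermiteSonin n (abs_nonneg x) (abs_nonneg y) hxy

theorem abs_eval_H_succ_le_of_abs_le {n : ℕ} {a x : ℝ} (ha : a ∈ hermiteZeros n)
    (hxa : |x| ≤ |a|) : |(H (n + 1)).eval x| ≤ |(H (n + 1)).eval a| := by
  have hzero : (H n).eval a = 0 := ha
  refine sq_le_sq.mp ?_
  calc (H (n + 1)).eval x ^ 2 ≤ hermiteSonin n x := le_add_of_nonneg_right (by positivity)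
    _ ≤ hermiteSonin n a := hermiteSonin_le_of_abs_le n hxa
    _ = (H (n + 1)).eval a ^ 2 := by simp [hermiteSonin, hzero]

theorem lt_of_abs_eval_H_succ_lt {n : ℕ} (hn : Even n) {a x : ℝ}
    (ha : IsGreatest (hermiteZeros n) a) (hx : |(H (n + 1)).eval a| < (H (n + 1)).eval x) :
    a < x := by
  by_contra! hxa
  rcases le_or_gt (-a) x with hax | hxa'
  · have hle : |x| ≤ |a| := (abs_le.mpr ⟨hax, hxa⟩).trans (le_abs_self a)
    exact hx.not_ge ((le_abs_self _).trans (abs_eval_H_succ_le_of_abs_le ha.1 hle))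
  · have hlt : a < -x := lt_neg_of_lt_neg hxa'
    have hmono : (H (n + 1)).eval a < (H (n + 1)).eval (-x) :=
      strictMonoOn_eval_H_succ ha.2 Set.self_mem_Ici hlt.le hlt
    rw [eval_H_neg_of_odd hn.add_one] at hmono
    linarith [neg_abs_le ((H (n + 1)).eval a)]

theorem existsUnique_eval_H_succ_eq_of_abs_lt {n : ℕ} (hn : Even n) {a c : ℝ}
    (ha : IsGreatest (hermiteZeros n) a) (hc : |(H (n + 1)).eval a| < c) :
    ∃! y, (H (n + 1)).eval y = c := by
  obtain ⟨y, hay, hy⟩ := intermediate_value_Ici (H (n + 1)).continuousOn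
    (tendsto_eval_H_succ_atTop n) (Set.mem_Ici.mpr ((le_abs_self _).trans hc.le))
  refine ⟨y, hy, fun z hz => (strictMonoOn_eval_H_succ ha.2).injOn ?_ hay (hz.trans hy.symm)⟩
  exact (lt_of_abs_eval_H_succ_lt hn ha (hc.trans_eq hz.symm)).le

theorem existsUnique_eval_H_succ_eq {n : ℕ} (hn : Even n) {a c : ℝ}
    (ha : IsGreatest (hermiteZeros n) a) (hc : |(H (n + 1)).eval a| < |c|) :
    ∃! y, (H (n + 1)).eval y = c := by
  rcases lt_abs.mp hc with hpos | hneg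
  · exact existsUnique_eval_H_succ_eq_of_abs_lt hn ha hpos
  · rw [(Equiv.neg ℝ).existsUnique_congr_left]
    simpa [eval_H_neg_of_odd hn.add_one, neg_eq_iff_eq_neg] using
      existsUnique_eval_H_succ_eq_of_abs_lt hn ha hneg

theorem abs_eval_H_succ_lt_of_lt {n : ℕ} (hn : Even n) {a s t : ℝ}
    (ha : IsGreatest (hermiteZeros n) a) (hat : a ≤ -t)
    (ht : (H (n + 1)).eval t = (H (n + 1)).eval a) (hst : s < t) :
    |(H (n + 1)).eval a| < |(H (n + 1)).eval s| := by
  have hmono : (H (n + 1)).eval (-t) < (H (n + 1)).eval (-s) :=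
    strictMonoOn_eval_H_succ ha.2 hat (hat.trans (neg_lt_neg hst).le) (neg_lt_neg hst)
  rw [eval_H_neg_of_odd hn.add_one, eval_H_neg_of_odd hn.add_one, ht] at hmono
  rw [abs_of_nonpos (eval_H_succ_nonpos_of_isGreatest ha)]
  exact lt_abs.mpr (Or.inr hmono)

theorem Phi_eq_zero_iff {n : ℕ} {θ : ℝ} (hθ : Real.sin θ ≠ 0) (x y : ℝ) :
    Phi n θ (x, y) = 0 ↔ (H n).eval y = -(Real.cos θ * (H n).eval x) / Real.sin θ := by
  rw [Phi, mul_eq_zero_iff_right (Real.exp_ne_zero _), eq_div_iff hθ, eq_neg_iff_add_eq_zero,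
    add_comm, mul_comm (eval y _)]

theorem isLeast_hermiteZeros {n m : ℕ} {t : Fin m → ℝ} (ht : Monotone t)
    (hzero : ∀ x : ℝ, (H n).eval x = 0 ↔ ∃ i, x = t i) (hm : 0 < m) :
    IsLeast (hermiteZeros n) (t ⟨0, hm⟩) := by
  have hrange : hermiteZeros n = Set.range t :=
    Set.ext fun x => (hzero x).trans (exists_congr fun _ => eq_comm)
  exact hrange ▸ isLeast_range_fin ht hm

theorem barrier_vertical_exactly_one_zero_general {n : ℕ} (hn : Odd n) {θ : ℝ}
    (hsin : Real.sin θ ≠ 0) (hle : |Real.sin θ| ≤ |Real.cos θ|) {b : ℝ}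
    (hb : IsLeast (hermiteZeros (n - 1)) b) {t₀ : ℝ} (ht₀b : t₀ ≤ b)
    (ht₀ : (H n).eval t₀ = -(H n).eval b) {s : ℝ} (hs : s < t₀) :
    ∃! y : ℝ, Phi n θ (s, y) = 0 := by
  obtain ⟨k, rfl⟩ := hn
  have hk : Even (2 * k) := even_two_mul k
  have hgreatest : IsGreatest (hermiteZeros (2 * k)) (-b) := isGreatest_hermiteZeros_neg hb
  have hlt : |(H (2 * k + 1)).eval (-b)| < |(H (2 * k + 1)).eval s| :=
    abs_eval_H_succ_lt_of_lt hk hgreatest (neg_le_neg ht₀b)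
      (ht₀.trans (eval_H_neg_of_odd hk.add_one b).symm) hs
  simp only [Phi_eq_zero_iff hsin]
  refine existsUnique_eval_H_succ_eq hk hgreatest (hlt.trans_le ?_)
  rw [abs_div, abs_neg, abs_mul, le_div_iff₀ (abs_pos.mpr hsin), mul_comm]
  gcongr

end

open Real Set in
/-- **Lemma 3.2 (2).** Let `n` be odd, `θ ∈ (0,π/4]`, let `t 0 < ⋯ < t (n-1)` enumerate
the zeros of `H_n` and `t' 0 < ⋯ < t' (n-2)` those of `H_{n-1}`, and let `t₀` be the
unique point in `(-∞, t_{n,1})` with `H_n(t₀) = -H_n(t_{n-1,1})`. Then for every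
`s < t₀`, the function `y ↦ Φ^θ_n(s,y)` has exactly one zero in `ℝ`. -/
theorem barrier_vertical_exactly_one_zero (n : ℕ) (hodd : Odd n) (hpos : 0 < n)
    (θ : ℝ) (hθ : θ ∈ Set.Ioc 0 (π / 4))
    (t : Fin n → ℝ) (htmono : StrictMono t)
    (htzero : ∀ x : ℝ, (H n).eval x = 0 ↔ ∃ i, x = t i)
    (t' : Fin (n - 1) → ℝ) (ht'mono : StrictMono t')
    (ht'zero : ∀ x : ℝ, (H (n - 1)).eval x = 0 ↔ ∃ i, x = t' i)
    (hn1 : 0 < n - 1)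
    (t₀ : ℝ) (ht₀lt : t₀ < t ⟨0, hpos⟩)
    (ht₀eq : (H n).eval t₀ = - (H n).eval (t' ⟨0, hn1⟩))
    (s : ℝ) (hs : s < t₀) :
    ∃! y : ℝ, Phi n θ (s, y) = 0 := by
  obtain ⟨k, rfl⟩ := hodd
  have hleast := isLeast_hermiteZeros htmono.monotone htzero hpos
  have hleast' := isLeast_hermiteZeros ht'mono.monotone ht'zero hn1
  have hsin : 0 < Real.sin θ := Real.sin_pos_of_pos_of_lt_pi hθ.1 (by linarith [hθ.2, pi_pos])
  have hcos : 0 ≤ Real.cos (2 * θ) := Real.cos_nonneg_of_mem_Icc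
    ⟨by linarith [hθ.1, pi_pos], by linarith [hθ.2]⟩
  exact barrier_vertical_exactly_one_zero_general (odd_two_mul_add_one k) hsin.ne'
    (abs_sin_le_abs_cos_iff.mpr hcos) hleast'
    (ht₀lt.le.trans (least_hermiteZeros_succ_le hleast' hleast)) ht₀eq hs
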